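/- Let n ≥ 2. There exists a constant C, depending only on n, such that for every weakly differentiable function u on ℝⁿ whose weak gradient belongs to the Lorentz space L^{n,1}(ℝⁿ), there exists λ ∈ ℝ with ‖u − λ‖_{L^∞(ℝⁿ)} ≤ C ‖∇u‖_{L^{n,1}(ℝⁿ)}. In particular, such u (more precisely, its continuous representative) is bounded on ℝⁿ. -/

import Mathlib

/-!
Write `F = ∑ i, |V i|`, `F*` for its rearrangement and `ω` for the volume of the unit ball.

* Hardy–Littlewood: over any ball of radius `r`, `∫ F ≤ Φ(r) := ∫₀^{ω rⁿ} F*(s) ds`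
  (`setLIntegral_le_rearr`). The right side does not depend on the centre, so the same bound holds
  for every average of translates of `F`, in particular for a mollification of `F`.
* For a `C¹` function `w` with `|∇w| ≤ G`, integrating along segments issuing from `x` and rescaling
  gives `∫_{B(x,R)} |w - w(x)| ≤ R ∫₀¹ t⁻ⁿ ∫_{B(x,tR)} G dt` (`mean_oscillation`).
* If the integral of `G` over balls of radius `r` is at most `Φ(r)`, exchanging the order of
  integration bounds the right side by `c Rⁿ ∫₀^∞ s^{1/n-1} F*(s) ds` (`hardy_tail`), which is
  `c Rⁿ` times the Lorentz norm. Comparing the means over `B(x,R) ⊆ B(y,2R)` then bounds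
  `|w(x) - w(y)|` uniformly in `x` and `y` (`osc_bound`).

Applied to the mollifications of `u`, whose gradients are the mollifications of `V`, this gives an
oscillation bound independent of the mollification parameter (`osc_mollify`). The mollifications
converge to `u` almost everywhere, so `lam = u x₀` works for any point `x₀` of convergence.
-/

open MeasureTheory ENNReal Set Filter

noncomputable section

/-- Euclidean space ℝⁿ. -/
abbrev Euc (n : ℕ) := EuclideanSpace ℝ (Fin n)

/-- Nonincreasing rearrangement of an `ℝ≥0∞`-valued function. -/
def rearrE {α : Type*} [MeasurableSpace α] (μ : Measure α) (f : α → ℝ≥0∞) (t : ℝ) : ℝ≥0∞ :=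
  sInf {l : ℝ≥0∞ | μ {x | l < f x} ≤ ENNReal.ofReal t}

/-- Unsigned nonincreasing rearrangement `f*` of a real-valued function. -/
def rearr {α : Type*} [MeasurableSpace α] (μ : Measure α) (f : α → ℝ) (t : ℝ) : ℝ≥0∞ :=
  rearrE μ (fun x => ENNReal.ofReal |f x|) t

/-- Lorentz functional ‖f‖_{p,q} = ( ∫₀^∞ (t^{1/p-1/q} f*(t))^q dt )^{1/q}, for finite q. -/
def lorentzNorm {α : Type*} [MeasurableSpace α] (μ : Measure α) (p q : ℝ) (f : α → ℝ) : ℝ≥0∞ :=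
  (∫⁻ t in Ioi (0 : ℝ), (ENNReal.ofReal (t ^ (1 / p - 1 / q)) * rearr μ f t) ^ q) ^ (1 / q)

/-- `u` is weakly differentiable on ℝⁿ with weak gradient `V`. -/
def HasWeakGradient {n : ℕ} (u : Euc n → ℝ) (V : Euc n → Fin n → ℝ) : Prop :=
  LocallyIntegrable u volume ∧ (∀ i, LocallyIntegrable (fun x => V x i) volume) ∧
    ∀ φ : Euc n → ℝ, ContDiff ℝ (⊤ : ℕ∞) φ → HasCompactSupport φ → ∀ i,
      ∫ x, u x * fderiv ℝ φ x (EuclideanSpace.single i 1) = - ∫ x, V x i * φ x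

lemma rearr_antitone {α : Type*} [MeasurableSpace α] (μ : Measure α) (f : α → ℝ) :
    Antitone (rearr μ f) := by
  intro s t hst
  exact sInf_le_sInf fun l hl => le_trans hl (ENNReal.ofReal_le_ofReal hst)

/-- Hardy–Littlewood: among sets of measure at most `b`, the integral of `f ≥ 0` is at most
`∫₀ᵇ f*`. Both sides are compared through the layer-cake formula. -/
lemma setLIntegral_le_rearr {α : Type*} [MeasurableSpace α] (μ : Measure α) [SFinite μ] {f : α → ℝ}
    (hf : AEMeasurable f μ) (hf0 : ∀ x, 0 ≤ f x) (E : Set α) (b : ℝ)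
    (hb : μ E ≤ ENNReal.ofReal b) :
    ∫⁻ x in E, ENNReal.ofReal (f x) ∂μ ≤ ∫⁻ t in Ioo 0 b, rearr μ f t := by
  set m : ℝ → ℝ≥0∞ := fun s => μ {x | s < f x} with hm
  have hm_meas : Measurable m := by
    refine Antitone.measurable fun s t hst => measure_mono fun x hx => ?_
    exact lt_of_le_of_lt hst hx
  have hS : MeasurableSet {p : ℝ × ℝ | ENNReal.ofReal p.2 < m p.1} :=
    measurableSet_lt (by fun_prop) (by fun_prop)
  rw [lintegral_eq_lintegral_meas_lt _ (Eventually.of_forall hf0) hf.restrict]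
  calc ∫⁻ s in Ioi (0 : ℝ), (μ.restrict E) {x | s < f x}
      ≤ ∫⁻ s in Ioi (0 : ℝ), ∫⁻ t in Ioo 0 b,
          {p : ℝ × ℝ | ENNReal.ofReal p.2 < m p.1}.indicator 1 (s, t) := by
        refine lintegral_mono fun s => ?_
        have hT : MeasurableSet {t : ℝ | ENNReal.ofReal t < m s} :=
          measurableSet_lt (by fun_prop) (by fun_prop)
        have : ∫⁻ t in Ioo 0 b, {p : ℝ × ℝ | ENNReal.ofReal p.2 < m p.1}.indicator 1 (s, t)
            = volume ({t : ℝ | ENNReal.ofReal t < m s} ∩ Ioo 0 b) := by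
          rw [← Measure.restrict_apply hT, ← lintegral_indicator_one hT]
          rfl
        rw [this]
        -- The level set of `f` meets `E` in measure at most `c = min (m s) b`, the length of
        -- `{t ∈ (0, b) | t < m s}`.
        set c := min (m s) (ENNReal.ofReal b) with hc
        have hcfin : c ≠ ⊤ := ne_top_of_le_ne_top ENNReal.ofReal_ne_top (min_le_right _ _)
        have h1 : (μ.restrict E) {x | s < f x} ≤ c :=
          le_min (Measure.restrict_apply_le _ _)
            ((measure_mono (subset_univ _)).trans (by simpa using hb))
        refine h1.trans ?_
        have h2 : c = volume (Ioo 0 c.toReal) := by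
          rw [Real.volume_Ioo, sub_zero, ENNReal.ofReal_toReal hcfin]
        rw [h2]
        refine measure_mono fun t ht => ?_
        have htc : ENNReal.ofReal t < c := (ENNReal.ofReal_lt_iff_lt_toReal ht.1.le hcfin).2 ht.2
        refine ⟨htc.trans_le (min_le_left _ _), ht.1, ?_⟩
        exact (ENNReal.ofReal_lt_ofReal_iff_of_nonneg ht.1.le).1
          (htc.trans_le (min_le_right _ _))
    _ = ∫⁻ t in Ioo 0 b, ∫⁻ s in Ioi (0 : ℝ),
          {p : ℝ × ℝ | ENNReal.ofReal p.2 < m p.1}.indicator 1 (s, t) := by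
        refine lintegral_lintegral_swap ?_
        exact (measurable_one.indicator hS).aemeasurable
    _ ≤ ∫⁻ t in Ioo 0 b, rearr μ f t := by
        refine lintegral_mono fun t => ?_
        have hT : MeasurableSet {s : ℝ | ENNReal.ofReal t < m s} :=
          measurableSet_lt (by fun_prop) (by fun_prop)
        have : ∫⁻ s in Ioi (0 : ℝ), {p : ℝ × ℝ | ENNReal.ofReal p.2 < m p.1}.indicator 1 (s, t)
            = volume ({s : ℝ | ENNReal.ofReal t < m s} ∩ Ioi 0) := by
          rw [← Measure.restrict_apply hT, ← lintegral_indicator_one hT]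
          rfl
        rw [this]
        -- If `μ {f > s} > t` then `f*(t) ≥ s`.
        by_cases hc : rearr μ f t = ⊤
        · rw [hc]; exact le_top
        have h2 : rearr μ f t = volume (Ioc 0 (rearr μ f t).toReal) := by
          rw [Real.volume_Ioc, sub_zero, ENNReal.ofReal_toReal hc]
        rw [h2]
        refine measure_mono fun s hs => ⟨hs.2, ?_⟩
        have : ENNReal.ofReal s ≤ rearr μ f t := by
          refine le_sInf fun l hl => ?_
          by_contra hlt
          push Not at hlt
          refine absurd hs.1 (not_lt.2 (le_trans (measure_mono fun x hx => ?_) hl))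
          have hx' : s < f x := hx
          show l < ENNReal.ofReal |f x|
          rw [abs_of_nonneg (hf0 x)]
          exact hlt.trans_le (ENNReal.ofReal_le_ofReal hx'.le)
        exact (ENNReal.ofReal_le_iff_le_toReal hc).1 this

lemma lintegral_tail {n : ℕ} (hn : 2 ≤ n) {a : ℝ} (ha : 0 < a) :
    ∫⁻ t in Ioi a, ENNReal.ofReal (t ^ (-(n : ℝ))) = ENNReal.ofReal (a ^ (1 - (n : ℝ)) / (n - 1)) := by
  have hn' : (2 : ℝ) ≤ n := by exact_mod_cast hn
  rw [← ofReal_integral_eq_lintegral_ofReal (integrableOn_Ioi_rpow_of_lt (by linarith) ha),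
    integral_Ioi_rpow_of_lt (by linarith) ha]
  · congr 1
    rw [show -(n : ℝ) + 1 = -(n - 1) by ring, neg_div_neg_eq, neg_sub]
  · refine (ae_restrict_mem measurableSet_Ioi).mono fun t ht => ?_
    exact Real.rpow_nonneg (ha.trans ht).le _

/-- The weighted Hardy inequality producing the `L^{n,1}` weight `s^{1/n-1}`: by Tonelli, `g s` is
weighted by the integral of `t⁻ⁿ` over `t > (s/ω)^{1/n} / R`. -/
lemma hardy_tail {n : ℕ} (hn : 2 ≤ n) {g : ℝ → ℝ≥0∞} (hg : Measurable g) {ω R : ℝ}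
    (hω : 0 < ω) (hR : 0 < R) :
    ∫⁻ t in Ioc (0 : ℝ) 1, ENNReal.ofReal (t ^ (-(n : ℝ))) *
        ∫⁻ s in Ioo 0 (ω * (t * R) ^ n), g s
      ≤ ENNReal.ofReal (R ^ ((n : ℝ) - 1) * ω ^ (1 - 1 / (n : ℝ)) / (n - 1)) *
        ∫⁻ s in Ioi (0 : ℝ), ENNReal.ofReal (s ^ (1 / (n : ℝ) - 1)) * g s := by
  have hn' : (2 : ℝ) ≤ n := by exact_mod_cast hn
  have hS : MeasurableSet {p : ℝ × ℝ | p.2 < ω * (p.1 * R) ^ n} :=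
    measurableSet_lt (by fun_prop) (by fun_prop)
  set h : ℝ → ℝ → ℝ≥0∞ := fun t s => {p : ℝ × ℝ | p.2 < ω * (p.1 * R) ^ n}.indicator
    (fun p => ENNReal.ofReal (p.1 ^ (-(n : ℝ))) * g p.2) (t, s) with hh
  have hmeas : Measurable (Function.uncurry h) :=
    Measurable.indicator (by fun_prop) hS
  calc _ = ∫⁻ t in Ioc (0 : ℝ) 1, ∫⁻ s in Ioi 0, h t s := by
        refine lintegral_congr fun t => ?_
        rw [← lintegral_const_mul _ hg, ← Ioi_inter_Iio, inter_comm,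
          ← setLIntegral_indicator measurableSet_Iio]
        rfl
    _ ≤ ∫⁻ t in Ioi (0 : ℝ), ∫⁻ s in Ioi 0, h t s :=
        lintegral_mono_set fun t ht => ht.1
    _ = ∫⁻ s in Ioi (0 : ℝ), ∫⁻ t in Ioi 0, h t s :=
        lintegral_lintegral_swap hmeas.aemeasurable
    _ ≤ ∫⁻ s in Ioi (0 : ℝ), ENNReal.ofReal (R ^ ((n : ℝ) - 1) * ω ^ (1 - 1 / (n : ℝ)) / (n - 1)) *
          (ENNReal.ofReal (s ^ (1 / (n : ℝ) - 1)) * g s) := by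
        refine setLIntegral_mono (by fun_prop) fun s (hs : 0 < s) => ?_
        set a := (s / ω) ^ (1 / (n : ℝ)) / R with ha
        have ha0 : 0 < a := by positivity
        have key : ∀ t, 0 < t → s < ω * (t * R) ^ n → a < t := by
          intro t ht hst
          rw [ha, div_lt_iff₀ hR]
          have h1 : s / ω < (t * R) ^ n := by rw [div_lt_iff₀ hω]; linarith
          have := Real.rpow_lt_rpow (by positivity) h1 (show 0 < 1 / (n : ℝ) by positivity)
          rwa [one_div, Real.pow_rpow_inv_natCast (by positivity) (by omega), ← one_div] at this
        calc ∫⁻ t in Ioi 0, h t s ≤ ∫⁻ t in Ioi 0, (Ioi a).indicator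
              (fun t => ENNReal.ofReal (t ^ (-(n : ℝ))) * g s) t := by
              refine setLIntegral_mono (by measurability) fun t (ht : 0 < t) => ?_
              by_cases hst : s < ω * (t * R) ^ n
              · rw [indicator_of_mem (show t ∈ Ioi a from key t ht hst)]
                exact indicator_le_self' (fun _ _ => zero_le) _
              · rw [hh]; simp only
                rw [indicator_of_notMem (by exact hst)]
                exact zero_le
          _ = ∫⁻ t in Ioi a, ENNReal.ofReal (t ^ (-(n : ℝ))) * g s := by
              rw [setLIntegral_indicator measurableSet_Ioi,
                inter_eq_left.2 (Ioi_subset_Ioi ha0.le)]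
          _ = ENNReal.ofReal (a ^ (1 - (n : ℝ)) / (n - 1)) * g s := by
              rw [lintegral_mul_const _ (by fun_prop), lintegral_tail hn ha0]
          _ = _ := by
              rw [← mul_assoc, ← ENNReal.ofReal_mul (by
                have : (0 : ℝ) < n - 1 := by linarith
                positivity)]
              congr 2
              rw [ha, Real.div_rpow (by positivity) hR.le, ← Real.rpow_mul (by positivity),
                show 1 / (n : ℝ) * (1 - n) = 1 / n - 1 by field_simp,
                Real.div_rpow hs.le hω.le, show (n : ℝ) - 1 = -(1 - n) by ring,
                Real.rpow_neg hR.le, show 1 - 1 / (n : ℝ) = -(1 / n - 1) by ring,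
                Real.rpow_neg hω.le]
              field_simp
    _ = _ := by
        rw [lintegral_const_mul]
        fun_prop

lemma lintegral_ball_homothety {n : ℕ} {G : Euc n → ℝ≥0∞} (hG : Measurable G) (x : Euc n)
    {t : ℝ} (ht : 0 < t) (R : ℝ) :
    ∫⁻ z in Metric.ball x R, G (x + t • (z - x))
      = ENNReal.ofReal (t ^ (-(n : ℝ))) * ∫⁻ y in Metric.ball x (t * R), G y := by
  set g := (Metric.ball x (t * R)).indicator G with hg
  have hgm : Measurable g := hG.indicator Metric.isOpen_ball.measurableSet
  have h1 : ∀ z, (Metric.ball x R).indicator (fun z => G (x + t • (z - x))) z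
      = g (x + t • (z - x)) := by
    intro z
    have : x + t • (z - x) ∈ Metric.ball x (t * R) ↔ z ∈ Metric.ball x R := by
      simp only [Metric.mem_ball, dist_eq_norm, add_sub_cancel_left, norm_smul, Real.norm_eq_abs,
        abs_of_pos ht]
      exact mul_lt_mul_iff_right₀ ht
    by_cases hz : z ∈ Metric.ball x R
    · rw [indicator_of_mem hz, hg, indicator_of_mem (this.2 hz)]
    · rw [indicator_of_notMem hz, hg, indicator_of_notMem (fun h => hz (this.1 h))]
  rw [← lintegral_indicator Metric.isOpen_ball.measurableSet,
    ← lintegral_indicator Metric.isOpen_ball.measurableSet, lintegral_congr h1,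
    lintegral_sub_right_eq_self (fun z => g (x + t • z)) x,
    ← lintegral_map (f := fun y => g (x + y)) (g := fun z => t • z) (by fun_prop) (by fun_prop),
    Measure.map_addHaar_smul _ ht.ne', lintegral_smul_measure, lintegral_add_left_eq_self]
  congr 2
  rw [finrank_euclideanSpace_fin, abs_of_pos (by positivity), Real.rpow_neg ht.le,
    Real.rpow_natCast]

/-- A form of the Riesz potential estimate that keeps the potential as an average of integrals
over concentric balls. -/
lemma mean_oscillation {n : ℕ} {w : Euc n → ℝ} (hw : ContDiff ℝ 1 w)
    {G : Euc n → ℝ≥0∞} (hG : Measurable G) (hwG : ∀ x, ‖fderiv ℝ w x‖ₑ ≤ G x)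
    (x : Euc n) (R : ℝ) :
    ∫⁻ z in Metric.ball x R, ‖w z - w x‖ₑ
      ≤ ENNReal.ofReal R * ∫⁻ t in Ioc (0 : ℝ) 1,
          ENNReal.ofReal (t ^ (-(n : ℝ))) * ∫⁻ y in Metric.ball x (t * R), G y := by
  calc ∫⁻ z in Metric.ball x R, ‖w z - w x‖ₑ
      ≤ ∫⁻ z in Metric.ball x R, ∫⁻ t in Ioc (0 : ℝ) 1,
          ENNReal.ofReal R * G (x + t • (z - x)) := by
        refine setLIntegral_mono' Metric.isOpen_ball.measurableSet fun z hz => ?_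
        have hd : ∀ t : ℝ, HasDerivAt (fun t : ℝ => w (x + t • (z - x)))
            (fderiv ℝ w (x + t • (z - x)) (z - x)) t := by
          intro t
          have h1 : HasDerivAt (fun t : ℝ => x + t • (z - x)) (z - x) t := by
            simpa using ((hasDerivAt_id t).smul_const (z - x)).const_add x
          exact ((hw.differentiable one_ne_zero _).hasFDerivAt).comp_hasDerivAt t h1
        have hc : Continuous fun t : ℝ => fderiv ℝ w (x + t • (z - x)) (z - x) := by
          have := hw.continuous_fderiv one_ne_zero
          fun_prop
        have hftc := intervalIntegral.integral_eq_sub_of_hasDerivAt (a := 0) (b := 1)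
          (fun t _ => hd t) (hc.intervalIntegrable 0 1)
        simp only [one_smul, zero_smul, add_zero, add_sub_cancel] at hftc
        rw [← hftc, intervalIntegral.integral_of_le zero_le_one]
        refine (enorm_integral_le_lintegral_enorm _).trans (lintegral_mono fun t => ?_)
        refine (ContinuousLinearMap.le_opENorm _ _).trans ?_
        rw [mul_comm]
        refine mul_le_mul' ?_ (hwG _)
        rw [← ofReal_norm]
        refine ENNReal.ofReal_le_ofReal ?_
        rw [← dist_eq_norm]
        exact (Metric.mem_ball.1 hz).le
    _ = ∫⁻ t in Ioc (0 : ℝ) 1, ∫⁻ z in Metric.ball x R,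
          ENNReal.ofReal R * G (x + t • (z - x)) := by
        refine lintegral_lintegral_swap (Measurable.aemeasurable ?_)
        simp only [Function.uncurry_def]
        fun_prop
    _ = ∫⁻ t in Ioc (0 : ℝ) 1, ENNReal.ofReal R * (ENNReal.ofReal (t ^ (-(n : ℝ))) *
          ∫⁻ y in Metric.ball x (t * R), G y) := by
        refine setLIntegral_congr_fun measurableSet_Ioc fun t ht => ?_
        rw [lintegral_const_mul' _ _ ENNReal.ofReal_ne_top, lintegral_ball_homothety hG x ht.1]
    _ = _ := lintegral_const_mul' _ _ ENNReal.ofReal_ne_top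

/-- Pointwise oscillation from mean oscillation, by averaging the triangle inequality over
`z ∈ B(x, R) ⊆ B(y, 2R)` with `R > dist x y`. -/
lemma osc_bound {n : ℕ} {w : Euc n → ℝ} (hw : Continuous w) {J : ℝ≥0∞}
    (h : ∀ x (R : ℝ), 0 < R →
      ∫⁻ z in Metric.ball x R, ‖w z - w x‖ₑ ≤ ENNReal.ofReal (R ^ n) * J) (x y : Euc n) :
    ‖w x - w y‖ₑ ≤ (1 + 2 ^ n) * J / volume (Metric.ball (0 : Euc n) 1) := by
  set R := dist x y + 1 with hR
  have hR0 : 0 < R := by positivity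
  set ω := volume (Metric.ball (0 : Euc n) 1) with hω
  have hω0 : ω ≠ 0 := (Metric.measure_ball_pos _ _ one_pos).ne'
  have hωt : ω ≠ ⊤ := measure_ball_lt_top.ne
  have hRn : ENNReal.ofReal (R ^ n) ≠ 0 := by
    rw [Ne, ENNReal.ofReal_eq_zero, not_le]; positivity
  have hvol : volume (Metric.ball x R) = ENNReal.ofReal (R ^ n) * ω := by
    rw [Measure.addHaar_ball_of_pos _ _ hR0, finrank_euclideanSpace_fin]
  have hsub : Metric.ball x R ⊆ Metric.ball y (2 * R) :=
    Metric.ball_subset_ball' (by rw [hR]; linarith)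
  have key : ENNReal.ofReal (R ^ n) * (‖w x - w y‖ₑ * ω)
      ≤ ENNReal.ofReal (R ^ n) * ((1 + 2 ^ n) * J) :=
    calc _ = ∫⁻ z in Metric.ball x R, ‖w x - w y‖ₑ := by
          rw [setLIntegral_const, hvol]; ring
      _ ≤ ∫⁻ z in Metric.ball x R, (‖w z - w x‖ₑ + ‖w z - w y‖ₑ) := by
          refine lintegral_mono fun z => ?_
          have : w x - w y = (w z - w y) - (w z - w x) := by ring
          rw [this, add_comm]
          exact enorm_sub_le
      _ = (∫⁻ z in Metric.ball x R, ‖w z - w x‖ₑ) + ∫⁻ z in Metric.ball x R, ‖w z - w y‖ₑ :=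
          lintegral_add_left (by fun_prop) _
      _ ≤ ENNReal.ofReal (R ^ n) * J + ENNReal.ofReal ((2 * R) ^ n) * J :=
          add_le_add (h x R hR0)
            ((lintegral_mono_set hsub).trans (h y (2 * R) (by positivity)))
      _ = _ := by
          rw [mul_pow, ENNReal.ofReal_mul (by positivity : (0 : ℝ) ≤ 2 ^ n),
            ENNReal.ofReal_pow (by norm_num : (0 : ℝ) ≤ 2),
            ENNReal.ofReal_ofNat]
          ring
  rw [ENNReal.le_div_iff_mul_le (Or.inl hω0) (Or.inl hωt)]
  exact (ENNReal.mul_le_mul_iff_right hRn ENNReal.ofReal_ne_top).1 key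

lemma enorm_clm_le_sum {n : ℕ} (L : Euc n →L[ℝ] ℝ) :
    ‖L‖ₑ ≤ ∑ i, ‖L (EuclideanSpace.single i 1)‖ₑ := by
  have : ‖L‖ ≤ ∑ i, ‖L (EuclideanSpace.single i 1)‖ := by
    refine L.opNorm_le_bound (by positivity) fun v => ?_
    have hv : v = ∑ i, v i • EuclideanSpace.single i (1 : ℝ) := by
      simpa using ((EuclideanSpace.basisFun (Fin n) ℝ).sum_repr v).symm
    conv_lhs => rw [hv]
    rw [map_sum, Finset.sum_mul]
    refine (norm_sum_le _ _).trans (Finset.sum_le_sum fun i _ => ?_)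
    rw [map_smul, norm_smul, mul_comm]
    gcongr
    exact PiLp.norm_apply_le v i
  simp only [← ofReal_norm]
  rw [← ENNReal.ofReal_sum_of_nonneg fun _ _ => norm_nonneg _]
  exact ENNReal.ofReal_le_ofReal this

open scoped Convolution in
/-- The gradient of a mollification is the mollification of the weak gradient: test the weak
gradient against `y ↦ φ (x - y)`. -/
lemma fderiv_convolution_single {n : ℕ} {u : Euc n → ℝ} {V : Euc n → Fin n → ℝ}
    (h : HasWeakGradient u V) {φ : Euc n → ℝ} (hφ : ContDiff ℝ (⊤ : ℕ∞) φ)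
    (hc : HasCompactSupport φ) (x : Euc n) (i : Fin n) :
    fderiv ℝ (φ ⋆[ContinuousLinearMap.lsmul ℝ ℝ, volume] u) x (EuclideanSpace.single i 1)
      = ∫ t, φ t * V (x - t) i := by
  obtain ⟨hu, -, hw⟩ := h
  have hφ1 : ContDiff ℝ 1 φ := hφ.of_le (by exact_mod_cast le_top)
  set ψ : Euc n → ℝ := fun y => φ (x - y) with hψ
  have hψs : ContDiff ℝ (⊤ : ℕ∞) ψ := hφ.comp (contDiff_const.sub contDiff_id)
  have hψc : HasCompactSupport ψ := hc.comp_homeomorph (Homeomorph.subLeft x)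
  have hψd : ∀ y, fderiv ℝ ψ y = - fderiv ℝ φ (x - y) := by
    intro y
    have h1 : HasFDerivAt (fun y : Euc n => x - y) (-ContinuousLinearMap.id ℝ (Euc n)) y := by
      simpa using (hasFDerivAt_id y).const_sub x
    have := ((hφ1.differentiable one_ne_zero (x - y)).hasFDerivAt.comp y h1).fderiv
    rw [hψ]
    refine this.trans ?_
    ext v
    simp
  have hE : ConvolutionExistsAt (fderiv ℝ φ) u x
      ((ContinuousLinearMap.lsmul ℝ ℝ).precompL (Euc n)) volume :=
    (hc.fderiv (𝕜 := ℝ)).convolutionExists_left _ (hφ1.continuous_fderiv one_ne_zero) hu x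
  rw [(hc.hasFDerivAt_convolution_left _ hφ1 hu x).fderiv, convolution_def,
    ContinuousLinearMap.integral_apply hE]
  have e1 := hw ψ hψs hψc i
  simp only [hψd] at e1
  calc _ = ∫ t, fderiv ℝ φ t (EuclideanSpace.single i 1) * u (x - t) := rfl
    _ = ∫ y, fderiv ℝ φ (x - y) (EuclideanSpace.single i 1) * u y := by
        rw [← integral_sub_left_eq_self (fun y => fderiv ℝ φ (x - y) _ * u y) volume x]
        simp only [_root_.sub_sub_cancel]
    _ = ∫ y, V y i * ψ y := by
        rw [← neg_inj, ← e1, ← integral_neg]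
        congr 1 with y
        simp only [neg_apply]
        ring
    _ = ∫ t, φ t * V (x - t) i := by
        rw [← integral_sub_left_eq_self (fun y => V y i * ψ y) volume x]
        congr 1 with y
        rw [hψ]
        simp only [_root_.sub_sub_cancel]
        ring

open scoped Convolution in
/-- The oscillation of a mollification of `u` is bounded by the Lorentz norm of the gradient, with
a constant independent of the bump `φ`. -/
lemma osc_mollify {n : ℕ} (hn : 2 ≤ n) {u : Euc n → ℝ} {V : Euc n → Fin n → ℝ}
    (h : HasWeakGradient u V) (φ : ContDiffBump (0 : Euc n)) (x y : Euc n) :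
    ‖(φ.normed volume ⋆[ContinuousLinearMap.lsmul ℝ ℝ, volume] u) x
      - (φ.normed volume ⋆[ContinuousLinearMap.lsmul ℝ ℝ, volume] u) y‖ₑ
      ≤ (1 + 2 ^ n) * (ENNReal.ofReal
          ((volume (Metric.ball (0 : Euc n) 1)).toReal ^ (1 - 1 / (n : ℝ)) / (n - 1)) *
          lorentzNorm volume (n : ℝ) 1 (fun x => ∑ i, |V x i|))
        / volume (Metric.ball (0 : Euc n) 1) := by
  have hn' : (2 : ℝ) ≤ n := by exact_mod_cast hn
  set η := φ.normed volume with hη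
  have hηc : HasCompactSupport η := φ.hasCompactSupport_normed
  have hηs : ContDiff ℝ (⊤ : ℕ∞) η := φ.contDiff_normed
  have hη0 : ∀ t, 0 ≤ η t := φ.nonneg_normed
  have hη1 : ∫⁻ t, ENNReal.ofReal (η t) = 1 := by
    rw [← ofReal_integral_eq_lintegral_ofReal φ.integrable_normed (Eventually.of_forall hη0),
      φ.integral_normed, ENNReal.ofReal_one]
  set w := η ⋆[ContinuousLinearMap.lsmul ℝ ℝ, volume] u with hw_def
  have hw : ContDiff ℝ 1 w :=
    hηc.contDiff_convolution_left _ (hηs.of_le (by exact_mod_cast le_top)) h.1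
  set f : Euc n → ℝ := fun x => ∑ i, |V x i| with hf_def
  have hf : AEMeasurable f volume :=
    Finset.aemeasurable_fun_sum _ fun i _ => (h.2.1 i).aestronglyMeasurable.aemeasurable.norm
  have hf0 : ∀ x, 0 ≤ f x := fun x => Finset.sum_nonneg fun i _ => abs_nonneg _
  -- `V` is only a.e. measurable; Tonelli below uses a Borel representative `F` of `∑ i, |V i|`.
  set F : Euc n → ℝ≥0∞ := fun x => ENNReal.ofReal (hf.mk f x) with hF_def
  have hF : Measurable F := hf.measurable_mk.ennreal_ofReal
  have hfF : (fun x => ENNReal.ofReal (f x)) =ᵐ[volume] F :=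
    hf.ae_eq_mk.fun_comp ENNReal.ofReal
  set ω := volume (Metric.ball (0 : Euc n) 1) with hω
  have hω0 : ω ≠ 0 := (Metric.measure_ball_pos _ _ one_pos).ne'
  have hωt : ω ≠ ⊤ := measure_ball_lt_top.ne
  have hωr : 0 < ω.toReal := ENNReal.toReal_pos hω0 hωt
  have hball : ∀ (x : Euc n) (r : ℝ), 0 < r → ∫⁻ z in Metric.ball x r, F z
      ≤ ∫⁻ s in Ioo 0 (ω.toReal * r ^ n), rearr volume f s := by
    intro x r hr
    rw [← lintegral_congr_ae (ae_restrict_of_ae hfF)]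
    refine setLIntegral_le_rearr volume hf hf0 _ _ ?_
    rw [Measure.addHaar_ball_of_pos _ _ hr, finrank_euclideanSpace_fin,
      ENNReal.ofReal_mul hωr.le, ENNReal.ofReal_toReal hωt, mul_comm]
  set G : Euc n → ℝ≥0∞ := fun x => ∫⁻ t, ENNReal.ofReal (η t) * F (x - t) with hG_def
  have hηm : Measurable fun t => ENNReal.ofReal (η t) := hηs.continuous.measurable.ennreal_ofReal
  have hGu : Measurable (Function.uncurry fun x t => ENNReal.ofReal (η t) * F (x - t)) := by
    exact (hηm.comp measurable_snd).mul (hF.comp (measurable_fst.sub measurable_snd))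
  have hG : Measurable G := hGu.lintegral_prod_right
  have hwG : ∀ x, ‖fderiv ℝ w x‖ₑ ≤ G x := by
    intro x
    have hVm : ∀ i, AEMeasurable (fun t => ‖η t * V (x - t) i‖ₑ) volume := by
      intro i
      have h1 := (h.2.1 i).aestronglyMeasurable.comp_quasiMeasurePreserving
        (quasiMeasurePreserving_sub_left volume x)
      exact (hηs.continuous.aestronglyMeasurable.mul h1).enorm
    calc ‖fderiv ℝ w x‖ₑ ≤ ∑ i, ‖fderiv ℝ w x (EuclideanSpace.single i 1)‖ₑ :=
          enorm_clm_le_sum _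
      _ ≤ ∑ i, ∫⁻ t, ‖η t * V (x - t) i‖ₑ := by
          refine Finset.sum_le_sum fun i _ => ?_
          rw [hw_def, fderiv_convolution_single h hηs hηc]
          exact enorm_integral_le_lintegral_enorm _
      _ = ∫⁻ t, ∑ i, ‖η t * V (x - t) i‖ₑ := (lintegral_finsetSum' _ fun i _ => hVm i).symm
      _ = ∫⁻ t, ENNReal.ofReal (η t) * ENNReal.ofReal (f (x - t)) := by
          refine lintegral_congr fun t => ?_
          rw [hf_def, ENNReal.ofReal_sum_of_nonneg fun i _ => abs_nonneg _, Finset.mul_sum]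
          refine Finset.sum_congr rfl fun i _ => ?_
          rw [enorm_mul, Real.enorm_eq_ofReal (hη0 t), Real.enorm_eq_ofReal_abs]
      _ = G x := by
          refine lintegral_congr_ae ?_
          filter_upwards [(quasiMeasurePreserving_sub_left volume x).ae hfF] with t ht
          rw [ht]
  -- The bound on ball integrals is independent of the centre, hence survives the averaging.
  have hGball : ∀ (x : Euc n) (r : ℝ), 0 < r → ∫⁻ z in Metric.ball x r, G z
      ≤ ∫⁻ s in Ioo 0 (ω.toReal * r ^ n), rearr volume f s := by
    intro x r hr
    rw [hG_def, lintegral_lintegral_swap hGu.aemeasurable]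
    calc _ ≤ ∫⁻ t, ENNReal.ofReal (η t) *
            ∫⁻ s in Ioo 0 (ω.toReal * r ^ n), rearr volume f s := by
          refine lintegral_mono fun t => ?_
          rw [lintegral_const_mul' _ _ ENNReal.ofReal_ne_top]
          gcongr
          refine le_trans (le_of_eq ?_) (hball (x - t) r hr)
          rw [← lintegral_indicator Metric.isOpen_ball.measurableSet,
            ← lintegral_indicator Metric.isOpen_ball.measurableSet,
            ← lintegral_sub_right_eq_self ((Metric.ball (x - t) r).indicator F) t]
          refine lintegral_congr fun z => ?_
          have : z - t ∈ Metric.ball (x - t) r ↔ z ∈ Metric.ball x r := by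
            simp only [Metric.mem_ball, dist_sub_right]
          by_cases hz : z ∈ Metric.ball x r
          · rw [indicator_of_mem hz, indicator_of_mem (this.2 hz)]
          · rw [indicator_of_notMem hz, indicator_of_notMem (fun h => hz (this.1 h))]
      _ = _ := by rw [lintegral_mul_const _ hηm, hη1, one_mul]
  have hN : lorentzNorm volume (n : ℝ) 1 f
      = ∫⁻ s in Ioi (0 : ℝ), ENNReal.ofReal (s ^ (1 / (n : ℝ) - 1)) * rearr volume f s := by
    simp [lorentzNorm]
  refine osc_bound hw.continuous (fun x R hR => ?_) x y
  refine (mean_oscillation hw hG hwG x R).trans ?_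
  calc _ ≤ ENNReal.ofReal R * ∫⁻ t in Ioc (0 : ℝ) 1, ENNReal.ofReal (t ^ (-(n : ℝ))) *
            ∫⁻ s in Ioo 0 (ω.toReal * (t * R) ^ n), rearr volume f s := by
        refine mul_le_mul_right ?_ _
        exact setLIntegral_mono' measurableSet_Ioc fun t ht =>
          mul_le_mul_right (hGball x (t * R) (mul_pos ht.1 hR)) _
    _ ≤ ENNReal.ofReal R * _ :=
        mul_le_mul_right (hardy_tail hn (rearr_antitone _ _).measurable hωr hR) _
    _ = _ := by
        rw [← hN, ← mul_assoc, ← mul_assoc, ← ENNReal.ofReal_mul hR.le,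
          ← ENNReal.ofReal_mul (by positivity), ← Real.rpow_natCast R n,
          ← mul_div_assoc, ← mul_div_assoc, ← mul_assoc, ← Real.rpow_one_add' hR.le (by linarith),
          add_sub_cancel]

/-- For n ≥ 2 there is C = C(n) such that for every weakly differentiable
u on ℝⁿ with |∇u| ∈ L^{n,1}(ℝⁿ) there is λ ∈ ℝ with ‖u − λ‖_{L^∞(ℝⁿ)} ≤ C ‖∇u‖_{L^{n,1}(ℝⁿ)};
in particular u is (essentially) bounded on ℝⁿ. -/
theorem stmt_1 (n : ℕ) (hn : 2 ≤ n) :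
    ∃ C : ℝ, 0 < C ∧
      ∀ (u : Euc n → ℝ) (V : Euc n → Fin n → ℝ), HasWeakGradient u V →
        lorentzNorm volume (n : ℝ) 1 (fun x => ∑ i, |V x i|) < ⊤ →
        (∃ lam : ℝ,
          eLpNorm (fun x => u x - lam) ⊤ volume ≤
            ENNReal.ofReal C * lorentzNorm volume (n : ℝ) 1 (fun x => ∑ i, |V x i|)) ∧
        eLpNorm u ⊤ volume < ⊤ := by
  have hn' : (2 : ℝ) ≤ n := by exact_mod_cast hn
  set ω := volume (Metric.ball (0 : Euc n) 1) with hω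
  have hω0 : ω ≠ 0 := (Metric.measure_ball_pos _ _ one_pos).ne'
  have hωt : ω ≠ ⊤ := measure_ball_lt_top.ne
  have hωr : 0 < ω.toReal := ENNReal.toReal_pos hω0 hωt
  have hn1 : (0 : ℝ) < n - 1 := by linarith
  refine ⟨(1 + 2 ^ n) * (ω.toReal ^ (1 - 1 / (n : ℝ)) / (n - 1)) / ω.toReal, by positivity, ?_⟩
  intro u V h hN
  set N := lorentzNorm volume (n : ℝ) 1 (fun x => ∑ i, |V x i|) with hN_def
  set C : ℝ := (1 + 2 ^ n) * (ω.toReal ^ (1 - 1 / (n : ℝ)) / (n - 1)) / ω.toReal with hC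
  have hCN : (1 + 2 ^ n) * (ENNReal.ofReal (ω.toReal ^ (1 - 1 / (n : ℝ)) / (n - 1)) * N) / ω
      = ENNReal.ofReal C * N := by
    rw [hC, ENNReal.ofReal_div_of_pos hωr, ENNReal.ofReal_toReal hωt,
      ENNReal.ofReal_mul (by positivity), ENNReal.ofReal_add (by norm_num) (by positivity),
      ENNReal.ofReal_one, ENNReal.ofReal_pow (by norm_num : (0 : ℝ) ≤ 2), ENNReal.ofReal_ofNat]
    simp only [div_eq_mul_inv]
    ring
  let φ : ℕ → ContDiffBump (0 : Euc n) := fun k =>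
    ⟨1 / ((k : ℝ) + 1), 2 * (1 / ((k : ℝ) + 1)), by positivity, by
      have : 0 < 1 / ((k : ℝ) + 1) := by positivity
      linarith⟩
  have hφ : Tendsto (fun k => (φ k).rOut) atTop (nhds 0) := by
    simpa [φ] using (tendsto_one_div_add_atTop_nhds_zero_nat (𝕜 := ℝ)).const_mul 2
  have hconv := ContDiffBump.ae_convolution_tendsto_right_of_locallyIntegrable (K := 2) hφ
    (Eventually.of_forall fun k => le_rfl) h.1
  obtain ⟨x₀, hx₀⟩ := hconv.exists
  have hbound : eLpNorm (fun x => u x - u x₀) ⊤ volume ≤ ENNReal.ofReal C * N := by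
    rw [eLpNorm_exponent_top]
    refine eLpNormEssSup_le_of_ae_enorm_bound ?_
    filter_upwards [hconv] with x hx
    refine le_of_tendsto (hx.sub hx₀).enorm (Eventually.of_forall fun k => ?_)
    exact (osc_mollify hn h (φ k) x x₀).trans hCN.le
  refine ⟨⟨u x₀, hbound⟩, ?_⟩
  have hsum : u = (fun x => u x - u x₀) + fun _ => u x₀ := by
    ext x
    simp
  rw [hsum]
  refine (eLpNorm_add_le (h.1.aestronglyMeasurable.sub aestronglyMeasurable_const)
    aestronglyMeasurable_const le_top).trans_lt (ENNReal.add_lt_top.2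
    ⟨hbound.trans_lt (ENNReal.mul_lt_top ENNReal.ofReal_lt_top hN), ?_⟩)
  exact (memLp_top_const (u x₀)).2
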